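/- arXiv:2106.08293 — 4 statements merged into one kernel-verified Lean document; each statement's English description precedes it below -/
import Mathlib

section
/- Fix a unit vector 𝐧 ∈ ℝⁿ and set P₀(z) = I − 2s(z)𝐧𝐧ᵀ. Let λ ∈ ℝ, let 𝐥, 𝐦 ∈ ℝⁿ with 𝐥·𝐧 = 𝐦·𝐧 = 0, and let W be an antisymmetric n×n matrix with W𝐧 = 0. Then the matrix-valued function Ψ(z) = λ s′(z)𝐧𝐧ᵀ + s(z)(𝐧𝐥ᵀ + 𝐥𝐧ᵀ) + (1 − s(z))(𝐧𝐦ᵀ − 𝐦𝐧ᵀ) + W satisfies −Ψ″(z) + P₀(z)P₀(z)ᵀΨ(z) + Ψ(z)P₀(z)ᵀP₀(z) + P₀(z)Ψ(z)ᵀP₀(z) − Ψ(z) = 0 for every z ∈ ℝ. -/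
/-!
`P₀` is symmetric and `𝐧𝐧ᵀ` is a projection, so `P₀P₀ᵀ = P₀ᵀP₀ = I − 4s(1−s)𝐧𝐧ᵀ`. Hence the
algebraic part of the operator acts diagonally on the four pieces of `Ψ`: it multiplies `𝐧𝐧ᵀ` by
`2 − 12s + 12s²`, `𝐧𝐥ᵀ + 𝐥𝐧ᵀ` by `2(1−s)(1−2s)`, `𝐧𝐦ᵀ − 𝐦𝐧ᵀ` by `−2s(1−2s)` and `W` by `0`
(`algebraic_part`). The profile equations `s″ = 2s(1−s)(1−2s)` and `s‴ = (2 − 12s + 12s²)s′`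
then show that each coefficient function of `Ψ` solves the corresponding scalar equation.
-/

open Matrix

/-- The standard one-dimensional Allen–Cahn transition profile. -/
noncomputable def sAC (z : ℝ) : ℝ := 1 - (1 + Real.exp (Real.sqrt 2 * z))⁻¹

lemma hasDerivAt_sAC (z : ℝ) :
    HasDerivAt sAC (Real.sqrt 2 * (sAC z * (1 - sAC z))) z := by
  have hpos : 1 + Real.exp (Real.sqrt 2 * z) ≠ 0 := by positivity
  have h := ((((hasDerivAt_id z).const_mul (Real.sqrt 2)).exp.const_add 1).inv hpos).const_sub 1
  refine h.congr_deriv ?_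
  simp only [sAC, id]
  field_simp
  ring

lemma deriv_sAC : deriv sAC = fun z => Real.sqrt 2 * (sAC z * (1 - sAC z)) :=
  funext fun z => (hasDerivAt_sAC z).deriv

lemma hasDerivAt_deriv_sAC (z : ℝ) :
    HasDerivAt (deriv sAC) (2 * sAC z * (1 - sAC z) * (1 - 2 * sAC z)) z := by
  have h := hasDerivAt_sAC z
  have h2 : Real.sqrt 2 * Real.sqrt 2 = 2 := Real.mul_self_sqrt (by norm_num)
  rw [deriv_sAC]
  refine ((h.mul (h.const_sub 1)).const_mul (Real.sqrt 2)).congr_deriv ?_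
  linear_combination (sAC z * (1 - sAC z) * (1 - 2 * sAC z)) * h2

lemma hasDerivAt_deriv_deriv_sAC (z : ℝ) :
    HasDerivAt (fun t => 2 * sAC t * (1 - sAC t) * (1 - 2 * sAC t))
      ((2 - 12 * sAC z + 12 * sAC z ^ 2) * deriv sAC z) z := by
  have h : HasDerivAt sAC (deriv sAC z) z := (hasDerivAt_sAC z).differentiableAt.hasDerivAt
  refine (((h.const_mul 2).mul (h.const_sub 1)).mul ((h.const_mul 2).const_sub 1)).congr_deriv ?_
  simp only [Pi.mul_apply]
  ring

/-- The second derivative of an entry of `Ψ`, whose coefficients are `λs′`, `s`, `1 − s` and `1`. -/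
lemma deriv_deriv_entry (lam a b c d z : ℝ) :
    deriv (deriv fun t => lam * deriv sAC t * a + sAC t * b + (1 - sAC t) * c + d) z
      = lam * ((2 - 12 * sAC z + 12 * sAC z ^ 2) * deriv sAC z) * a
        + 2 * sAC z * (1 - sAC z) * (1 - 2 * sAC z) * (b - c) := by
  have h1 : deriv (fun t => lam * deriv sAC t * a + sAC t * b + (1 - sAC t) * c + d)
      = fun t => lam * (2 * sAC t * (1 - sAC t) * (1 - 2 * sAC t)) * a + deriv sAC t * (b - c) := by
    funext t
    have h : HasDerivAt sAC (deriv sAC t) t := (hasDerivAt_sAC t).differentiableAt.hasDerivAt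
    refine HasDerivAt.deriv ((((((hasDerivAt_deriv_sAC t).const_mul lam).mul_const a).add
      (h.mul_const b)).add ((h.const_sub 1).mul_const c)).add_const d |>.congr_deriv ?_)
    ring
  rw [h1]
  exact ((((hasDerivAt_deriv_deriv_sAC z).const_mul lam).mul_const a).add
    ((hasDerivAt_deriv_sAC z).mul_const (b - c))).deriv

/-- The zeroth-order part of the linearized operator at `I − 2s𝐧𝐧ᵀ`, applied to a matrix
decomposed with respect to `𝐧`. -/
lemma algebraic_part {n : ℕ} {v l m : Fin n → ℝ} {W P Ψ : Matrix (Fin n) (Fin n) ℝ} {s p q r : ℝ}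
    (hv : v ⬝ᵥ v = 1) (hl : l ⬝ᵥ v = 0) (hm : m ⬝ᵥ v = 0) (hW : Wᵀ = -W) (hWn : W *ᵥ v = 0)
    (hP : P = 1 - (2 * s) • vecMulVec v v)
    (hΨ : Ψ = p • vecMulVec v v + q • (vecMulVec v l + vecMulVec l v)
      + r • (vecMulVec v m - vecMulVec m v) + W) :
    P * Pᵀ * Ψ + Ψ * (Pᵀ * P) + P * Ψᵀ * P - Ψ
      = (p * (2 - 12 * s + 12 * s ^ 2)) • vecMulVec v v
        + (q * (2 * (1 - s) * (1 - 2 * s))) • (vecMulVec v l + vecMulVec l v)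
        + (r * (-2 * s * (1 - 2 * s))) • (vecMulVec v m - vecMulVec m v) := by
  have hvl : v ⬝ᵥ l = 0 := by rw [dotProduct_comm, hl]
  have hvm : v ⬝ᵥ m = 0 := by rw [dotProduct_comm, hm]
  have hvW : v ᵥ* W = 0 := by
    rw [← mulVec_transpose, hW, neg_mulVec, hWn, neg_zero]
  have hNW : vecMulVec v v * W = 0 := by rw [vecMulVec_mul, hvW, vecMulVec_zero]
  have hWN : W * vecMulVec v v = 0 := by rw [mul_vecMulVec, hWn, zero_vecMulVec]
  have hPt : Pᵀ = P := by
    simp [hP, transpose_vecMulVec]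
  have hPP : P * P = 1 - (4 * s * (1 - s)) • vecMulVec v v := by
    simp only [hP, sub_mul, mul_sub, one_mul, mul_one, smul_mul_assoc, mul_smul_comm,
      vecMulVec_mul_vecMulVec, hv, one_smul]
    module
  have hΨt : Ψᵀ = p • vecMulVec v v + q • (vecMulVec v l + vecMulVec l v)
      - r • (vecMulVec v m - vecMulVec m v) - W := by
    simp only [hΨ, transpose_add, transpose_sub, transpose_smul, transpose_vecMulVec, hW]
    module
  rw [hPt, hPP, hΨt, hΨ, hP]
  simp only [sub_mul, mul_sub, add_mul, mul_add, one_mul, mul_one, smul_mul_assoc, mul_smul_comm,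
    vecMulVec_mul_vecMulVec, hv, hl, hm, hvl, hvm, hNW, hWN, one_smul, zero_smul, vecMulVec_zero,
    smul_zero, zero_mul, smul_add, smul_sub]
  module

/-- With `P₀(z) = I − 2s(z)𝐧𝐧ᵀ`, the profile
`Ψ(z) = λs′(z)𝐧𝐧ᵀ + s(z)(𝐧𝐥ᵀ + 𝐥𝐧ᵀ) + (1 − s(z))(𝐧𝐦ᵀ − 𝐦𝐧ᵀ) + W` (with `𝐥,𝐦 ⟂ 𝐧` and
`W` antisymmetric with `W𝐧 = 0`) lies in the kernel of the linearized operator: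
`−Ψ″ + P₀P₀ᵀΨ + ΨP₀ᵀP₀ + P₀ΨᵀP₀ − Ψ = 0`. -/
theorem stmt5 (n : ℕ) (v : Fin n → ℝ) (hv : (∑ i, v i ^ 2) = 1)
    (lam : ℝ) (l m : Fin n → ℝ) (hl : l ⬝ᵥ v = 0) (hm : m ⬝ᵥ v = 0)
    (W : Matrix (Fin n) (Fin n) ℝ) (hW : Wᵀ = -W) (hWn : W.mulVec v = 0)
    (P₀ Ψ : ℝ → Matrix (Fin n) (Fin n) ℝ)
    (hP₀ : ∀ z, P₀ z = 1 - (2 * sAC z) • vecMulVec v v)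
    (hΨ : ∀ z, Ψ z = (lam * deriv sAC z) • vecMulVec v v
      + sAC z • (vecMulVec v l + vecMulVec l v)
      + (1 - sAC z) • (vecMulVec v m - vecMulVec m v) + W) :
    ∀ z : ℝ,
      (Matrix.of fun i j => -(deriv (deriv (fun t => Ψ t i j)) z))
        + P₀ z * (P₀ z)ᵀ * Ψ z + Ψ z * ((P₀ z)ᵀ * P₀ z) + P₀ z * (Ψ z)ᵀ * P₀ z - Ψ z = 0 := by
  intro z
  have hv' : v ⬝ᵥ v = 1 := by
    rw [← hv]
    exact Finset.sum_congr rfl fun i _ => (sq (v i)).symm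
  have halg := algebraic_part hv' hl hm hW hWn (hP₀ z) (hΨ z)
  have hder : (Matrix.of fun i j => -(deriv (deriv (fun t => Ψ t i j)) z))
      = -((lam * ((2 - 12 * sAC z + 12 * sAC z ^ 2) * deriv sAC z)) • vecMulVec v v
        + (2 * sAC z * (1 - sAC z) * (1 - 2 * sAC z)) •
          ((vecMulVec v l + vecMulVec l v) - (vecMulVec v m - vecMulVec m v))) := by
    ext i j
    have hij : (fun t => Ψ t i j) = fun t => lam * deriv sAC t * vecMulVec v v i j
        + sAC t * (vecMulVec v l + vecMulVec l v) i j
        + (1 - sAC t) * (vecMulVec v m - vecMulVec m v) i j + W i j := by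
      funext t
      rw [hΨ]
      rfl
    rw [of_apply, hij, deriv_deriv_entry]
    rfl
  rw [add_assoc, add_assoc, add_sub_assoc, ← add_assoc (P₀ z * (P₀ z)ᵀ * Ψ z), halg, hder]
  module
end

section
/- Let f : ℝ → ℝ be continuous with finite limits f₊ = lim_{z→+∞} f(z) and f₋ = lim_{z→−∞} f(z), and suppose there are constants C > 0 and k ∈ ℕ with |f(z) − f₊| ≤ C(1+|z|)^k (1 − s(z)) for z ≥ 0 and |f(z) − f₋| ≤ C(1+|z|)^k s(z) for z ≤ 0, and that ∫_ℝ f(z) s′(z) dz = 0. Then the function u(z) = s′(z)/s′(0) + s′(z)∫₀^z s′(ς)⁻² (∫_ς^{+∞} f(τ) s′(τ) dτ) dς is a bounded solution of −u″(z) + 2(1 − 6s(z) + 6s(z)²) u(z) = f(z) on ℝ with u(0) = 1, it satisfies u(z) → f₊/2 as z → +∞ and u(z) → f₋/2 as z → −∞, and it is the unique bounded solution of this ODE with u(0) = 1. -/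
/-!
Write `φ = s′ = √2 s (1 - s) > 0`. Then `φ′ = √2 (1 - 2s) φ` and `φ″ = κ φ` with
`κ = 2 (1 - 6s + 6s²)`, so `φ` spans the bounded kernel of `ℒ₁`, and the formula for `u` is
variation of constants: with `F(z) = ∫_z^∞ f φ` and `I(z) = ∫_0^z F / φ²`, one has
`F′ = -f φ`, `I′ = F / φ²`, and direct differentiation of `u = φ/φ(0) + φ I` gives `u″ = κ u - f`.

The limits of `φ I = I / φ⁻¹` follow from two applications of l'Hôpital's rule. The first, of type
`?/∞` (`lhopital_infty_atTop`, absent from Mathlib and proved below), reduces the claim to the limit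
of `-F / φ′`; the second, of type `0/0`, reduces this to `f φ / φ″ = f / κ`, where `κ → 2`.
The orthogonality `∫ f φ = 0` is what makes `F → 0` also at `-∞`.
Boundedness of `u` follows from the limits.

For uniqueness (`eq_zero_of_bounded`), the difference `v` of two solutions has constant Wronskian
`v′ φ - v φ′ = c`. The `?/∞` rule applied to `v / φ⁻¹` shows `v φ → c / √2` at `+∞`, whereas
`v φ → 0` because `v` is bounded; hence `c = 0`, so `v / φ` is constant and
vanishes at `0`.
-/

open MeasureTheory Filter

/-! ### L'Hôpital's rule with infinite denominator -/

/-- The case `L = 0` of `lhopital_infty_atTop`: since `|h′| ≤ ε g′` for large `x`, the functions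
`ε g ± h` are eventually monotone, which bounds `|h|` by `ε g` plus a constant. -/
lemma lhopital_infty_atTop_zero {h h' g g' : ℝ → ℝ}
    (hh : ∀ x, HasDerivAt h (h' x) x) (hg : ∀ x, HasDerivAt g (g' x) x)
    (hpos : ∀ᶠ x in atTop, 0 < g' x) (hginf : Tendsto g atTop atTop)
    (hlim : Tendsto (fun x => h' x / g' x) atTop (nhds 0)) :
    Tendsto (fun x => h x / g x) atTop (nhds 0) := by
  rw [Metric.tendsto_nhds] at hlim ⊢
  intro ε hε
  -- One `ε / 4` bounds the ratio of derivatives past `a`, another the contribution of `h a`, `g a`.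
  have hev := hlim (ε / 4) (by positivity)
  obtain ⟨a, ha⟩ := eventually_atTop.1 (hev.and hpos)
  have hb : ∀ x, a ≤ x → |h' x| ≤ ε / 4 * g' x := by
    intro x hx
    obtain ⟨h1, h2⟩ := ha x hx
    rw [Real.dist_eq, sub_zero, abs_div, abs_of_pos h2, div_lt_iff₀ h2] at h1
    exact h1.le
  have key : ∀ σ : ℝ, |σ| = 1 → MonotoneOn (fun x => ε / 4 * g x + σ * h x) (Set.Ici a) := by
    intro σ hσ
    have hd : ∀ x, HasDerivAt (fun x => ε / 4 * g x + σ * h x) (ε / 4 * g' x + σ * h' x) x :=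
      fun x => ((hg x).const_mul _).add ((hh x).const_mul _)
    refine monotoneOn_of_deriv_nonneg (convex_Ici a)
      (fun x _ => (hd x).continuousAt.continuousWithinAt)
      (fun x _ => (hd x).differentiableAt.differentiableWithinAt) ?_
    intro x hx
    rw [interior_Ici] at hx
    rw [(hd x).deriv]
    have h1 := hb x (le_of_lt hx)
    have h2 : |σ * h' x| = |h' x| := by rw [abs_mul, hσ, one_mul]
    have h3 := neg_abs_le (σ * h' x)
    linarith
  have k1 := key 1 (by simp)
  have k2 := key (-1) (by simp)
  filter_upwards [eventually_ge_atTop a,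
    hginf.eventually_gt_atTop 0,
    hginf.eventually_gt_atTop ((|h a| + ε / 4 * |g a|) / (ε / 4))] with x hx h0 hK
  have e1 := k1 (Set.mem_Ici.2 le_rfl) (Set.mem_Ici.2 hx) hx
  have e2 := k2 (Set.mem_Ici.2 le_rfl) (Set.mem_Ici.2 hx) hx
  simp only at e1 e2
  rw [div_lt_iff₀ (by positivity)] at hK
  rw [Real.dist_eq, sub_zero, abs_div, abs_of_pos h0, div_lt_iff₀ h0]
  have q1 := neg_abs_le (h a)
  have q2 := le_abs_self (h a)
  have q3 : ε / 4 * -|g a| ≤ ε / 4 * g a :=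
    mul_le_mul_of_nonneg_left (neg_abs_le (g a)) (by positivity)
  have q4 : 0 < ε * g x := by positivity
  rw [abs_lt]
  constructor <;> linarith

/-- L'Hôpital's rule at `+∞` when the denominator tends to `+∞`; nothing is assumed about the
limit of the numerator. -/
lemma lhopital_infty_atTop {h h' g g' : ℝ → ℝ} {L : ℝ}
    (hh : ∀ x, HasDerivAt h (h' x) x) (hg : ∀ x, HasDerivAt g (g' x) x)
    (hpos : ∀ᶠ x in atTop, 0 < g' x) (hginf : Tendsto g atTop atTop)
    (hlim : Tendsto (fun x => h' x / g' x) atTop (nhds L)) :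
    Tendsto (fun x => h x / g x) atTop (nhds L) := by
  have h0 : Tendsto (fun x => (h x - L * g x) / g x) atTop (nhds 0) := by
    refine lhopital_infty_atTop_zero (h' := fun x => h' x - L * g' x)
      (fun x => (hh x).sub ((hg x).const_mul L)) hg hpos hginf ?_
    have : Tendsto (fun x => h' x / g' x - L) atTop (nhds 0) := by
      simpa using hlim.sub_const L
    refine this.congr' ?_
    filter_upwards [hpos] with x hx
    field_simp
  have h1 : Tendsto (fun x => (h x - L * g x) / g x + L) atTop (nhds L) := by
    simpa using h0.add_const L
  refine h1.congr' ?_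
  filter_upwards [hginf.eventually_gt_atTop 0] with x hx
  field_simp
  ring

lemma lhopital_infty_atBot {h h' g g' : ℝ → ℝ} {L : ℝ}
    (hh : ∀ x, HasDerivAt h (h' x) x) (hg : ∀ x, HasDerivAt g (g' x) x)
    (hneg : ∀ᶠ x in atBot, g' x < 0) (hginf : Tendsto g atBot atTop)
    (hlim : Tendsto (fun x => h' x / g' x) atBot (nhds L)) :
    Tendsto (fun x => h x / g x) atBot (nhds L) := by
  have hn : Tendsto (fun x : ℝ => -x) atTop atBot := tendsto_neg_atTop_atBot
  have hd : ∀ {p p' : ℝ → ℝ}, (∀ x, HasDerivAt p (p' x) x) →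
      ∀ x, HasDerivAt (fun y => p (-y)) (-p' (-x)) x := by
    intro p p' hp x
    simpa [Function.comp_def] using (hp (-x)).comp x (hasDerivAt_neg x)
  have := lhopital_infty_atTop (L := L) (hd hh) (hd hg)
    (by filter_upwards [hn.eventually hneg] with x hx; linarith) (hginf.comp hn)
    (by simpa [Function.comp_def, neg_div_neg_eq] using hlim.comp hn)
  simpa [Function.comp_def] using this.comp tendsto_neg_atBot_atTop

/-! ### The profile `s` and the kernel element `φ = s′` -/

/-- The derivative `s′` of the profile, expressed through `s` (see `deriv_sAC`). -/
noncomputable def phiAC (z : ℝ) : ℝ := Real.sqrt 2 * sAC z * (1 - sAC z)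

lemma sAC_pos (z : ℝ) : 0 < sAC z := by
  unfold sAC
  have := Real.exp_pos (Real.sqrt 2 * z)
  have h : (1 + Real.exp (Real.sqrt 2 * z))⁻¹ < 1 := inv_lt_one_of_one_lt₀ (by linarith)
  linarith

lemma sAC_lt_one (z : ℝ) : sAC z < 1 := by
  unfold sAC
  have : 0 < (1 + Real.exp (Real.sqrt 2 * z))⁻¹ := by positivity
  linarith

lemma phiAC_pos (z : ℝ) : 0 < phiAC z := by
  have h1 := sAC_pos z
  have h2 : 0 < 1 - sAC z := by linarith [sAC_lt_one z]
  unfold phiAC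
  positivity

lemma hasDerivAt_sAC_s6 (z : ℝ) : HasDerivAt sAC (phiAC z) z := by
  have h1 : HasDerivAt (fun z => 1 + Real.exp (Real.sqrt 2 * z))
      (Real.exp (Real.sqrt 2 * z) * Real.sqrt 2) z := by
    simpa using (((hasDerivAt_id z).const_mul (Real.sqrt 2)).exp).const_add 1
  have hne : 1 + Real.exp (Real.sqrt 2 * z) ≠ 0 := by positivity
  have h2 := (h1.inv hne).const_sub 1
  refine h2.congr_deriv ?_
  unfold phiAC sAC
  field_simp
  ring

lemma deriv_sAC_s6 : deriv sAC = phiAC := funext fun z => (hasDerivAt_sAC_s6 z).deriv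

lemma hasDerivAt_phiAC (z : ℝ) :
    HasDerivAt phiAC (Real.sqrt 2 * (1 - 2 * sAC z) * phiAC z) z := by
  have h := ((hasDerivAt_sAC_s6 z).const_mul (Real.sqrt 2)).mul ((hasDerivAt_sAC_s6 z).const_sub 1)
  refine h.congr_deriv ?_
  ring

/-- `φ″ = κ φ`: differentiating the Allen–Cahn equation shows that `φ` lies in the kernel. -/
lemma hasDerivAt_phiAC' (z : ℝ) :
    HasDerivAt (fun z => Real.sqrt 2 * (1 - 2 * sAC z) * phiAC z)
      (2 * (1 - 6 * sAC z + 6 * (sAC z) ^ 2) * phiAC z) z := by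
  have h := ((((hasDerivAt_sAC_s6 z).const_mul 2).const_sub 1).const_mul (Real.sqrt 2)).mul
    (hasDerivAt_phiAC z)
  refine h.congr_deriv ?_
  have h2 : Real.sqrt 2 * Real.sqrt 2 = 2 := Real.mul_self_sqrt (by norm_num)
  unfold phiAC
  linear_combination (Real.sqrt 2 * sAC z * (1 - sAC z)) *
    (-2 * sAC z * (1 - sAC z) + (1 - 2 * sAC z) ^ 2) * h2

lemma continuous_sAC : Continuous sAC :=
  continuous_iff_continuousAt.2 fun z => (hasDerivAt_sAC_s6 z).continuousAt

lemma continuous_phiAC : Continuous phiAC :=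
  continuous_iff_continuousAt.2 fun z => (hasDerivAt_phiAC z).continuousAt

lemma sAC_atTop : Tendsto sAC atTop (nhds 1) := by
  have h1 : Tendsto (fun z : ℝ => Real.sqrt 2 * z) atTop atTop :=
    tendsto_id.const_mul_atTop (by positivity)
  have h2 := tendsto_inv_atTop_zero.comp
    (tendsto_atTop_add_const_left atTop (1 : ℝ) (Real.tendsto_exp_atTop.comp h1))
  simpa [show sAC = fun z => 1 - (1 + Real.exp (Real.sqrt 2 * z))⁻¹ from rfl,
    Function.comp_def] using h2.const_sub 1

lemma sAC_atBot : Tendsto sAC atBot (nhds 0) := by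
  have h1 : Tendsto (fun z : ℝ => Real.sqrt 2 * z) atBot atBot :=
    tendsto_id.const_mul_atBot (by positivity)
  have h2 := ((Real.tendsto_exp_atBot.comp h1).const_add 1).inv₀ (by norm_num)
  simpa [show sAC = fun z => 1 - (1 + Real.exp (Real.sqrt 2 * z))⁻¹ from rfl,
    Function.comp_def] using h2.const_sub 1

lemma phiAC_atTop : Tendsto phiAC atTop (nhds 0) := by
  have := (sAC_atTop.const_mul (Real.sqrt 2)).mul (sAC_atTop.const_sub 1)
  simpa [show phiAC = fun z => Real.sqrt 2 * sAC z * (1 - sAC z) from rfl] using this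

lemma phiAC_atBot : Tendsto phiAC atBot (nhds 0) := by
  have := (sAC_atBot.const_mul (Real.sqrt 2)).mul (sAC_atBot.const_sub 1)
  simpa [show phiAC = fun z => Real.sqrt 2 * sAC z * (1 - sAC z) from rfl] using this

lemma inv_phiAC_tendsto {l : Filter ℝ} (h : Tendsto phiAC l (nhds 0)) :
    Tendsto (fun z => (phiAC z)⁻¹) l atTop :=
  tendsto_inv_nhdsGT_zero.comp
    (tendsto_nhdsWithin_iff.2 ⟨h, Eventually.of_forall fun z => phiAC_pos z⟩)

lemma hasDerivAt_inv_phiAC (z : ℝ) :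
    HasDerivAt (fun z => (phiAC z)⁻¹) (-(Real.sqrt 2 * (1 - 2 * sAC z)) / phiAC z) z := by
  have hp := (phiAC_pos z).ne'
  refine ((hasDerivAt_phiAC z).inv hp).congr_deriv ?_
  field_simp

lemma integrable_phiAC : Integrable phiAC := by
  refine integrable_of_intervalIntegral_norm_bounded (l := atTop) (a := fun x : ℝ => -x)
    (b := fun x => x) 1
    (fun x => continuous_phiAC.integrableOn_Ioc) tendsto_neg_atTop_atBot tendsto_id
    (Eventually.of_forall fun x => ?_)
  have h : ∀ y, ‖phiAC y‖ = phiAC y := fun y => Real.norm_of_nonneg (phiAC_pos y).le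
  simp only [h]
  rw [intervalIntegral.integral_eq_sub_of_hasDerivAt (fun y _ => hasDerivAt_sAC_s6 y)
    (continuous_phiAC.intervalIntegrable _ _)]
  linarith [sAC_pos (-x), sAC_lt_one x]

/-! ### Bounded functions and the particular solution -/

lemma bounded_of_limits {f : ℝ → ℝ} (hf : Continuous f) {a b : ℝ}
    (ha : Tendsto f atTop (nhds a)) (hb : Tendsto f atBot (nhds b)) :
    ∃ M : ℝ, ∀ z, |f z| ≤ M := by
  obtain ⟨A, hA⟩ := eventually_atTop.1 (ha.abs.eventually_le_const (lt_add_one |a|))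
  obtain ⟨B, hB⟩ := eventually_atBot.1 (hb.abs.eventually_le_const (lt_add_one |b|))
  obtain ⟨K, hK⟩ := (isCompact_Icc (a := B) (b := A)).exists_bound_of_continuousOn hf.continuousOn
  refine ⟨max K (max (|a| + 1) (|b| + 1)), fun z => ?_⟩
  rcases le_total A z with h | h
  · exact (hA z h).trans (by simp)
  rcases le_total z B with h' | h'
  · exact (hB z h').trans (by simp)
  · exact (hK z ⟨h', h⟩).trans (by simp)

/-- The `0/0` step at `+∞`: `F / φ′` has the limit of `F′ / φ″ = -f / κ`, and `κ → 2`. -/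
lemma ratio_atTop {F f : ℝ → ℝ} {L : ℝ} (hF : ∀ z, HasDerivAt F (-(f z * phiAC z)) z)
    (hF0 : Tendsto F atTop (nhds 0)) (hf : Tendsto f atTop (nhds L)) :
    Tendsto (fun z => F z / (Real.sqrt 2 * (1 - 2 * sAC z) * phiAC z)) atTop
      (nhds (-L / 2)) := by
  have hκ : Tendsto (fun z => 2 * (1 - 6 * sAC z + 6 * (sAC z) ^ 2)) atTop (nhds 2) := by
    have := (((sAC_atTop.const_mul 6).const_sub 1).add ((sAC_atTop.pow 2).const_mul 6)).const_mul 2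
    convert this using 2
    norm_num
  have hκ0 := hκ.eventually_ne two_ne_zero
  refine HasDerivAt.lhopital_zero_atTop (Eventually.of_forall hF)
    (Eventually.of_forall hasDerivAt_phiAC') ?_ hF0 ?_ ?_
  · filter_upwards [hκ0] with z hz using mul_ne_zero hz (phiAC_pos z).ne'
  · simpa using ((sAC_atTop.const_mul 2).const_sub 1).const_mul (Real.sqrt 2) |>.mul phiAC_atTop
  · refine (hf.neg.div hκ two_ne_zero).congr fun z => ?_
    rw [← neg_mul, mul_div_mul_right _ _ (phiAC_pos z).ne', Pi.div_apply]

/-- The analogue of `ratio_atTop` at `-∞`. -/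
lemma ratio_atBot {F f : ℝ → ℝ} {L : ℝ} (hF : ∀ z, HasDerivAt F (-(f z * phiAC z)) z)
    (hF0 : Tendsto F atBot (nhds 0)) (hf : Tendsto f atBot (nhds L)) :
    Tendsto (fun z => F z / (Real.sqrt 2 * (1 - 2 * sAC z) * phiAC z)) atBot
      (nhds (-L / 2)) := by
  have hκ : Tendsto (fun z => 2 * (1 - 6 * sAC z + 6 * (sAC z) ^ 2)) atBot (nhds 2) := by
    have := (((sAC_atBot.const_mul 6).const_sub 1).add ((sAC_atBot.pow 2).const_mul 6)).const_mul 2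
    convert this using 2
    norm_num
  have hκ0 := hκ.eventually_ne two_ne_zero
  refine HasDerivAt.lhopital_zero_atBot (Eventually.of_forall hF)
    (Eventually.of_forall hasDerivAt_phiAC') ?_ hF0 ?_ ?_
  · filter_upwards [hκ0] with z hz using mul_ne_zero hz (phiAC_pos z).ne'
  · simpa using ((sAC_atBot.const_mul 2).const_sub 1).const_mul (Real.sqrt 2) |>.mul phiAC_atBot
  · refine (hf.neg.div hκ two_ne_zero).congr fun z => ?_
    rw [← neg_mul, mul_div_mul_right _ _ (phiAC_pos z).ne', Pi.div_apply]

/-- `I′ / (φ⁻¹)′ = -F / φ′`. -/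
lemma ratio_eq (F : ℝ → ℝ) (z : ℝ) :
    -(F z / (Real.sqrt 2 * (1 - 2 * sAC z) * phiAC z)) =
      ((phiAC z ^ 2)⁻¹ * F z) / (-(Real.sqrt 2 * (1 - 2 * sAC z)) / phiAC z) := by
  have hp := (phiAC_pos z).ne'
  have h2 : Real.sqrt 2 ≠ 0 := by positivity
  by_cases h : 1 - 2 * sAC z = 0
  · simp [h]
  · field_simp

/-- The `?/∞` step at `+∞`, applied to `φ I = I / φ⁻¹`. -/
lemma limit_atTop {F f I : ℝ → ℝ} {L : ℝ} (hF : ∀ z, HasDerivAt F (-(f z * phiAC z)) z)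
    (hI : ∀ z, HasDerivAt I ((phiAC z ^ 2)⁻¹ * F z) z)
    (hF0 : Tendsto F atTop (nhds 0)) (hf : Tendsto f atTop (nhds L)) :
    Tendsto (fun z => phiAC z * I z) atTop (nhds (L / 2)) := by
  have := lhopital_infty_atTop (L := L / 2) hI hasDerivAt_inv_phiAC ?_
    (inv_phiAC_tendsto phiAC_atTop) ?_
  · simpa [mul_comm] using this
  · filter_upwards [sAC_atTop.eventually_const_lt (show (1 / 2 : ℝ) < 1 by norm_num)] with z hz
    refine div_pos ?_ (phiAC_pos z)
    have h2 : 0 < Real.sqrt 2 := by positivity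
    nlinarith
  · refine Tendsto.congr (ratio_eq F) ?_
    simpa [neg_div] using (ratio_atTop hF hF0 hf).neg

lemma limit_atBot {F f I : ℝ → ℝ} {L : ℝ} (hF : ∀ z, HasDerivAt F (-(f z * phiAC z)) z)
    (hI : ∀ z, HasDerivAt I ((phiAC z ^ 2)⁻¹ * F z) z)
    (hF0 : Tendsto F atBot (nhds 0)) (hf : Tendsto f atBot (nhds L)) :
    Tendsto (fun z => phiAC z * I z) atBot (nhds (L / 2)) := by
  have := lhopital_infty_atBot (L := L / 2) hI hasDerivAt_inv_phiAC ?_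
    (inv_phiAC_tendsto phiAC_atBot) ?_
  · simpa [mul_comm] using this
  · filter_upwards [sAC_atBot.eventually_lt_const (show (0 : ℝ) < 1 / 2 by norm_num)] with z hz
    refine div_neg_of_neg_of_pos ?_ (phiAC_pos z)
    have h2 : 0 < Real.sqrt 2 := by positivity
    nlinarith
  · refine Tendsto.congr (ratio_eq F) ?_
    simpa [neg_div] using (ratio_atBot hF hF0 hf).neg

/-! ### Uniqueness -/

/-- A bounded element of the kernel of `ℒ₁` vanishing at `0` is zero. -/
lemma eq_zero_of_bounded {v v' : ℝ → ℝ} (hv : ∀ z, HasDerivAt v (v' z) z)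
    (hv' : ∀ z, HasDerivAt v' (2 * (1 - 6 * sAC z + 6 * (sAC z) ^ 2) * v z) z)
    (hb : ∃ M : ℝ, ∀ z, |v z| ≤ M) (h0 : v 0 = 0) (z : ℝ) : v z = 0 := by
  set c := v' 0 * phiAC 0 with hc
  have hW : ∀ x, v' x * phiAC x - v x * (Real.sqrt 2 * (1 - 2 * sAC x) * phiAC x) = c := by
    intro x
    have hd : ∀ y, HasDerivAt
        (fun x => v' x * phiAC x - v x * (Real.sqrt 2 * (1 - 2 * sAC x) * phiAC x)) 0 y :=
      fun y => (((hv' y).mul (hasDerivAt_phiAC y)).sub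
        ((hv y).mul (hasDerivAt_phiAC' y))).congr_deriv (by ring)
    have := is_const_of_deriv_eq_zero (fun y => (hd y).differentiableAt) (fun y => (hd y).deriv) x 0
    simpa [h0, hc] using this
  obtain ⟨M, hM⟩ := hb
  have hvφ : Tendsto (fun x => v x * phiAC x) atTop (nhds 0) := by
    refine squeeze_zero_norm (a := fun x => M * phiAC x) (fun x => ?_) ?_
    · rw [norm_mul, Real.norm_eq_abs, Real.norm_eq_abs, abs_of_pos (phiAC_pos x)]
      exact mul_le_mul_of_nonneg_right (hM x) (phiAC_pos x).le
    · simpa using phiAC_atTop.const_mul M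
  have hs : Tendsto (fun x => Real.sqrt 2 * (1 - 2 * sAC x)) atTop (nhds (-Real.sqrt 2)) := by
    have := ((sAC_atTop.const_mul 2).const_sub 1).const_mul (Real.sqrt 2)
    convert this using 2
    ring
  have h2 : 0 < Real.sqrt 2 := by positivity
  -- By the Wronskian identity, `v′ φ → c`, so l'Hôpital gives `v φ → c / √2`.
  have hlim : Tendsto (fun x => v x / (phiAC x)⁻¹) atTop (nhds (c / Real.sqrt 2)) := by
    refine lhopital_infty_atTop hv hasDerivAt_inv_phiAC ?_ (inv_phiAC_tendsto phiAC_atTop) ?_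
    · filter_upwards [hs.eventually_lt_const (neg_lt_zero.2 h2)] with x hx
      exact div_pos (by linarith) (phiAC_pos x)
    · have h3 : Tendsto (fun x => v' x * phiAC x) atTop (nhds c) := by
        have := (hvφ.mul hs).const_add c
        rw [zero_mul, add_zero] at this
        refine this.congr fun x => ?_
        linear_combination -(hW x)
      have h4 := h3.div hs.neg (by simp)
      rw [neg_neg] at h4
      refine h4.congr fun x => ?_
      rw [div_div_eq_mul_div, Pi.div_apply]
  have hc0 : c = 0 := by
    have h5 : Tendsto (fun x => v x * phiAC x) atTop (nhds (c / Real.sqrt 2)) := by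
      simpa using hlim
    have := tendsto_nhds_unique h5 hvφ
    simpa [h2.ne'] using this
  have hq : ∀ y, HasDerivAt (fun x => v x * (phiAC x)⁻¹) 0 y := fun y =>
    ((hv y).mul (hasDerivAt_inv_phiAC y)).congr_deriv (by
      have hp := (phiAC_pos y).ne'
      field_simp
      have h6 : phiAC y * (v' y - v y * (Real.sqrt 2 * (1 - 2 * sAC y))) = 0 := by
        linear_combination hW y + hc0
      have h7 := (mul_eq_zero.1 h6).resolve_left hp
      linear_combination h7)
  have := is_const_of_deriv_eq_zero (fun y => (hq y).differentiableAt) (fun y => (hq y).deriv) z 0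
  simpa [h0, (phiAC_pos z).ne'] using this

/-! ### The theorem -/

/-- Solvability of `ℒ₁u = −u″ + 2(1 − 6s + 6s²)u = f` on `ℝ`: under polynomially-weighted
decay of `f` towards its limits `f₊`, `f₋` and the orthogonality condition `∫ f s′ = 0`,
the explicit function `u` is a bounded solution with `u(0) = 1`, has limits `f₊/2`, `f₋/2`
at `±∞`, and is the unique bounded (C²) solution with `u(0) = 1`. -/
theorem stmt6 (f : ℝ → ℝ) (hf : Continuous f) (fp fm : ℝ)
    (hfp : Tendsto f atTop (nhds fp)) (hfm : Tendsto f atBot (nhds fm))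
    (C : ℝ) (hC : 0 < C) (k : ℕ)
    (hdp : ∀ z : ℝ, 0 ≤ z → |f z - fp| ≤ C * (1 + |z|) ^ k * (1 - sAC z))
    (hdm : ∀ z : ℝ, z ≤ 0 → |f z - fm| ≤ C * (1 + |z|) ^ k * sAC z)
    (horth : (∫ z : ℝ, f z * deriv sAC z) = 0)
    (u : ℝ → ℝ)
    (hu : ∀ z, u z = deriv sAC z / deriv sAC 0 +
      deriv sAC z * ∫ ς in (0 : ℝ)..z,
        ((deriv sAC ς) ^ 2)⁻¹ * ∫ τ in Set.Ioi ς, f τ * deriv sAC τ) :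
    (∃ M : ℝ, ∀ z, |u z| ≤ M) ∧
    (∀ z : ℝ, -(deriv (deriv u) z) + 2 * (1 - 6 * sAC z + 6 * (sAC z) ^ 2) * u z = f z) ∧
    u 0 = 1 ∧
    Tendsto u atTop (nhds (fp / 2)) ∧ Tendsto u atBot (nhds (fm / 2)) ∧
    (∀ w : ℝ → ℝ, ContDiff ℝ 2 w → (∃ M : ℝ, ∀ z, |w z| ≤ M) →
      (∀ z : ℝ, -(deriv (deriv w) z) + 2 * (1 - 6 * sAC z + 6 * (sAC z) ^ 2) * w z = f z) →
      w 0 = 1 → w = u) := by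
  rw [deriv_sAC_s6] at horth hu
  set F : ℝ → ℝ := fun ς => ∫ τ in Set.Ioi ς, f τ * phiAC τ with hFdef
  set I : ℝ → ℝ := fun z => ∫ ς in (0 : ℝ)..z, ((phiAC ς) ^ 2)⁻¹ * F ς with hIdef
  have hcont : Continuous fun τ => f τ * phiAC τ := hf.mul continuous_phiAC
  obtain ⟨Mf, hMf⟩ := bounded_of_limits hf hfp hfm
  have hint : Integrable fun τ => f τ * phiAC τ :=
    integrable_phiAC.bdd_mul hf.aestronglyMeasurable (Eventually.of_forall hMf)
  have hFeq : ∀ z, F z = F 0 - ∫ τ in (0 : ℝ)..z, f τ * phiAC τ := by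
    intro z
    have := intervalIntegral.integral_interval_add_Ioi (a := 0) (b := z)
      hint.integrableOn hint.integrableOn
    simp only [hFdef]
    linarith
  have hF : ∀ z, HasDerivAt F (-(f z * phiAC z)) z := by
    intro z
    have h1 := (hcont.integral_hasStrictDerivAt 0 z).hasDerivAt.const_sub (F 0)
    rwa [← funext hFeq] at h1
  have hFc : Continuous F := continuous_iff_continuousAt.2 fun z => (hF z).continuousAt
  have hFtop : Tendsto F atTop (nhds 0) := by
    have h1 := (intervalIntegral_tendsto_integral_Ioi 0 (hint.integrableOn (s := Set.Ioi 0))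
      tendsto_id).const_sub (F 0)
    rw [sub_self] at h1
    exact h1.congr fun z => (hFeq z).symm
  -- By orthogonality, `F 0 = -∫_{-∞}^0 f φ`, so `F` also vanishes at `-∞`.
  have hFbot : Tendsto F atBot (nhds 0) := by
    have h1 := (intervalIntegral_tendsto_integral_Iic 0 (hint.integrableOn (s := Set.Iic 0))
      tendsto_id).const_add (F 0)
    have h2 := intervalIntegral.integral_Iic_add_Ioi (b := 0)
      (hint.integrableOn (s := Set.Iic 0)) (hint.integrableOn (s := Set.Ioi 0))
    rw [horth] at h2
    rw [show F 0 + ∫ x in Set.Iic 0, f x * phiAC x = 0 by rw [add_comm]; exact h2] at h1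
    refine h1.congr fun z => ?_
    rw [hFeq z, intervalIntegral.integral_symm, ← sub_eq_add_neg]
    rfl
  have hI : ∀ z, HasDerivAt I ((phiAC z ^ 2)⁻¹ * F z) z := by
    have hc : Continuous fun z => (phiAC z ^ 2)⁻¹ * F z :=
      ((continuous_phiAC.pow 2).inv₀ fun z => (pow_pos (phiAC_pos z) 2).ne').mul hFc
    exact fun z => (hc.integral_hasStrictDerivAt 0 z).hasDerivAt
  have hu' : u = fun z => phiAC z / phiAC 0 + phiAC z * I z := funext hu
  have hd1 : ∀ z, HasDerivAt u (Real.sqrt 2 * (1 - 2 * sAC z) * phiAC z / phiAC 0 +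
      (Real.sqrt 2 * (1 - 2 * sAC z) * phiAC z * I z + (phiAC z)⁻¹ * F z)) z := by
    intro z
    rw [hu']
    refine (((hasDerivAt_phiAC z).div_const _).add
      ((hasDerivAt_phiAC z).mul (hI z))).congr_deriv ?_
    have hp := (phiAC_pos z).ne'
    field_simp
  have hd2 : ∀ z, HasDerivAt (deriv u)
      (2 * (1 - 6 * sAC z + 6 * (sAC z) ^ 2) * u z - f z) z := by
    intro z
    rw [funext fun z => (hd1 z).deriv]
    refine (((hasDerivAt_phiAC' z).div_const _).add (((hasDerivAt_phiAC' z).mul (hI z)).add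
      ((hasDerivAt_inv_phiAC z).mul (hF z)))).congr_deriv ?_
    have hp := (phiAC_pos z).ne'
    have hp0 := (phiAC_pos 0).ne'
    rw [hu']
    field_simp
    ring
  have huc : Continuous u := continuous_iff_continuousAt.2 fun z => (hd1 z).continuousAt
  have htop : Tendsto u atTop (nhds (fp / 2)) := by
    rw [hu']
    simpa using (phiAC_atTop.div_const (phiAC 0)).add (limit_atTop hF hI hFtop hfp)
  have hbot : Tendsto u atBot (nhds (fm / 2)) := by
    rw [hu']
    simpa using (phiAC_atBot.div_const (phiAC 0)).add (limit_atBot hF hI hFbot hfm)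
  have hu0 : u 0 = 1 := by
    rw [hu']
    simp [hIdef, (phiAC_pos 0).ne']
  have hbd := bounded_of_limits huc htop hbot
  refine ⟨hbd, fun z => ?_, hu0, htop, hbot, ?_⟩
  · rw [(hd2 z).deriv]
    ring
  · intro w hw hwb hwe hw0
    obtain ⟨M, hM⟩ := hbd
    obtain ⟨N, hN⟩ := hwb
    have hw1 : ∀ z, HasDerivAt w (deriv w z) z := fun z =>
      (hw.differentiable (by norm_num) z).hasDerivAt
    have hw2 : ∀ z, HasDerivAt (deriv w) (deriv (deriv w) z) z := by
      have h1 : ContDiff ℝ 1 (deriv w) :=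
        ((contDiff_succ_iff_deriv (n := 1)).1 (by simpa [one_add_one_eq_two] using hw)).2.2
      exact fun z => (h1.differentiable (by norm_num) z).hasDerivAt
    funext z
    refine sub_eq_zero.1 (eq_zero_of_bounded (v := fun z => w z - u z)
      (v' := fun z => deriv w z - deriv u z)
      (fun z => (hw1 z).sub (hd1 z).differentiableAt.hasDerivAt)
      (fun z => ((hw2 z).sub (hd2 z)).congr_deriv ?_)
      ⟨N + M, fun z => (abs_sub _ _).trans (add_le_add (hN z) (hM z))⟩ (by simp [hw0, hu0]) z)
    linear_combination -(hwe z)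
end

section
/- Fix a unit vector 𝐧 ∈ ℝⁿ and a real number t, and set P₀ = I − 2t𝐧𝐧ᵀ. Let E₂ ∈ V₂, E₃ ∈ V₃, E₄ ∈ V₄ and set P₁ = tE₂ + (1−t)E₃ + E₄. Let B = B₁ + B₂ + B₃ + B₄ with Bᵢ ∈ Vᵢ for i = 1,2,3,4. Then T_f(P₀, P₁, B) : B = 2t E₂ : [(2t−1)(B₃B₄ + B₄B₃) + (3−4t)(B₁B₂ + B₂B₁)] + 2(1−t) E₃ : [(1−4t)(B₁B₃ + B₃B₁) + (1−2t)(B₂B₄ + B₄B₂)] + 2(1−2t) E₄ : (B₂B₃ + B₃B₂). -/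
/-! Both sides are linear in `(E₂, E₃, E₄)` and quadratic in `B`.
Writing `A : M = tr (Aᵀ M)` and using cyclicity of the trace, the left side is
`Q : B Bᵀ + R : Bᵀ B + 2 P₁ : B P₀ B` with `Q = P₀ P₁ᵀ + P₁ P₀ᵀ` and `R = P₀ᵀ P₁ + P₁ᵀ P₀`
(`finner_Tf_eq`). In terms of vectors `a, b ⟂ v` generating `E₂, E₃`, the matrices `Q` and `R`
are `2 t (1 - t)` times the symmetric products of `v` with `a + b` and `a - b`
(`Q_eq`, `R_eq`); in particular `E₄` drops out of them. With `B v` and `Bᵀ v` explicit, each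
remaining Frobenius product is a sum of products with rank-one matrices, that is, of bilinear
expressions `x ⬝ᵥ M *ᵥ y`, and of the product `E₄ : B₄ ^ 2`. The former are expanded using
`v ⬝ᵥ v = 1`, orthogonality to `v`, and the fact that antisymmetric matrices in `V₄` kill `v` on
both sides; the latter vanishes because `E₄` is antisymmetric and `B₄ ^ 2` symmetric
(`finner_skew_mul_self`). -/

open Matrix

noncomputable section

/-- Frobenius inner product of matrices. -/
def finner {n : ℕ} (A B : Matrix (Fin n) (Fin n) ℝ) : ℝ := ∑ i, ∑ j, A i j * B i j

/-- The trilinear form `T_f(A₁,A₂,A₃)`. -/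
def Tf {n : ℕ} (A1 A2 A3 : Matrix (Fin n) (Fin n) ℝ) : Matrix (Fin n) (Fin n) ℝ :=
  (A1 * A2ᵀ + A2 * A1ᵀ) * A3 + A3 * (A1ᵀ * A2 + A2ᵀ * A1) + (A1 * A3ᵀ * A2 + A2 * A3ᵀ * A1)

section helpers

variable {n : ℕ}

lemma finner_eq_trace (A B : Matrix (Fin n) (Fin n) ℝ) : finner A B = trace (Aᵀ * B) := by
  simp only [finner, trace, diag_apply, mul_apply, transpose_apply]
  exact Finset.sum_comm

lemma finner_add_left (A B C : Matrix (Fin n) (Fin n) ℝ) :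
    finner (A + B) C = finner A C + finner B C := by
  simp [finner_eq_trace, add_mul]

lemma finner_sub_left (A B C : Matrix (Fin n) (Fin n) ℝ) :
    finner (A - B) C = finner A C - finner B C := by
  simp [finner_eq_trace, sub_mul]

lemma finner_smul_left (c : ℝ) (A C : Matrix (Fin n) (Fin n) ℝ) :
    finner (c • A) C = c * finner A C := by
  simp [finner_eq_trace]

lemma finner_add_right (A B C : Matrix (Fin n) (Fin n) ℝ) :
    finner A (B + C) = finner A B + finner A C := by
  simp [finner_eq_trace, mul_add]

lemma finner_sub_right (A B C : Matrix (Fin n) (Fin n) ℝ) :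
    finner A (B - C) = finner A B - finner A C := by
  simp [finner_eq_trace, mul_sub]

lemma finner_neg_right (A C : Matrix (Fin n) (Fin n) ℝ) : finner A (-C) = -finner A C := by
  simp [finner_eq_trace]

lemma finner_smul_right (c : ℝ) (A C : Matrix (Fin n) (Fin n) ℝ) :
    finner A (c • C) = c * finner A C := by
  simp [finner_eq_trace]

lemma finner_vec_left (a b : Fin n → ℝ) (M : Matrix (Fin n) (Fin n) ℝ) :
    finner (vecMulVec a b) M = a ⬝ᵥ M *ᵥ b := by
  simp only [finner_eq_trace, transpose_vecMulVec, vecMulVec_mul, trace_vecMulVec]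
  rw [dotProduct_mulVec, dotProduct_comm]

lemma finner_vec_right (a b : Fin n → ℝ) (M : Matrix (Fin n) (Fin n) ℝ) :
    finner M (vecMulVec a b) = a ⬝ᵥ M *ᵥ b := by
  rw [← finner_vec_left]
  simp [finner, mul_comm]

lemma finner_skew_mul_self {E W : Matrix (Fin n) (Fin n) ℝ} (hE : Eᵀ = -E) (hW : Wᵀ = -W) :
    finner E (W * W) = 0 := by
  have h : trace (E * (W * W)) = -trace (E * (W * W)) := by
    conv_lhs => rw [← trace_transpose]
    simp only [transpose_mul, hE, hW]
    rw [trace_mul_comm]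
    simp
  rw [finner_eq_trace, hE]
  simp only [neg_mul, trace_neg]
  linarith

/-- Reduction of `T_f(P,P₁,B) : B` by cyclicity of the trace, for symmetric `P`. -/
lemma finner_Tf_eq {P : Matrix (Fin n) (Fin n) ℝ} (hP : Pᵀ = P)
    (P1 B : Matrix (Fin n) (Fin n) ℝ) :
    finner (Tf P P1 B) B = finner (P * P1ᵀ + P1 * P) (B * Bᵀ) + finner (P * P1 + P1ᵀ * P) (Bᵀ * B)
      + 2 * finner P1 (B * P * B) := by
  have h1 : finner ((P * P1ᵀ + P1 * P) * B) B = finner (P * P1ᵀ + P1 * P) (B * Bᵀ) := by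
    rw [finner_eq_trace, finner_eq_trace, transpose_mul, trace_mul_comm, trace_mul_comm _ (B * Bᵀ)]
    simp only [Matrix.mul_assoc]
  have h2 : finner (B * (P * P1 + P1ᵀ * P)) B = finner (P * P1 + P1ᵀ * P) (Bᵀ * B) := by
    rw [finner_eq_trace, finner_eq_trace, transpose_mul]
    simp only [Matrix.mul_assoc]
  have h3 : finner (P * Bᵀ * P1) B = finner P1 (B * P * B) := by
    simp only [finner_eq_trace, transpose_mul, transpose_transpose, hP, Matrix.mul_assoc]
  have h4 : finner (P1 * Bᵀ * P) B = finner P1 (B * P * B) := by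
    simp only [finner_eq_trace, transpose_mul, transpose_transpose, hP]
    rw [show P * (B * P1ᵀ) * B = (P * B) * (P1ᵀ * B) by simp only [Matrix.mul_assoc],
      trace_mul_comm]
    simp only [Matrix.mul_assoc]
  simp only [Tf, hP]
  rw [finner_add_left, finner_add_left, finner_add_left, h1, h2, h3, h4]
  ring

/-- The coefficient of `B Bᵀ`: the part of `P₁` in `V₄` cancels, and the parts in `V₂` and `V₃`
both contribute symmetric matrices. -/
lemma Q_eq {v a b : Fin n → ℝ} {X : Matrix (Fin n) (Fin n) ℝ} (t : ℝ) (hv : v ⬝ᵥ v = 1)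
    (ha : a ⬝ᵥ v = 0) (hb : b ⬝ᵥ v = 0) (hX : Xᵀ = -X) (hXv : X *ᵥ v = 0) :
    (1 - (2 * t) • vecMulVec v v) *
        (t • (vecMulVec v a + vecMulVec a v) + (1 - t) • (vecMulVec v b - vecMulVec b v) + X)ᵀ
      + (t • (vecMulVec v a + vecMulVec a v) + (1 - t) • (vecMulVec v b - vecMulVec b v) + X)
        * (1 - (2 * t) • vecMulVec v v)
      = (2 * t * (1 - t)) • (vecMulVec v (a + b) + vecMulVec (a + b) v) := by
  have hXv' : v ᵥ* X = 0 := by rw [← mulVec_transpose, hX, neg_mulVec, hXv, neg_zero]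
  have ha' : v ⬝ᵥ a = 0 := by rw [dotProduct_comm, ha]
  have hb' : v ⬝ᵥ b = 0 := by rw [dotProduct_comm, hb]
  simp only [transpose_add, transpose_sub, transpose_smul, transpose_vecMulVec, hX, sub_mul,
    mul_sub, add_mul, mul_add, smul_mul_assoc, mul_smul_comm, one_mul,
    mul_one, mul_neg, vecMulVec_mul, mul_vecMulVec, hXv, hXv']
  ext i j
  simp [vecMulVec_apply, vecMulVec_mulVec, hv, ha, hb, ha', hb']
  ring

/-- The coefficient of `Bᵀ B`; compared with `Q_eq`, the vector `b` generating the part in `V₃`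
changes sign. -/
lemma R_eq {v a b : Fin n → ℝ} {X : Matrix (Fin n) (Fin n) ℝ} (t : ℝ) (hv : v ⬝ᵥ v = 1)
    (ha : a ⬝ᵥ v = 0) (hb : b ⬝ᵥ v = 0) (hX : Xᵀ = -X) (hXv : X *ᵥ v = 0) :
    (1 - (2 * t) • vecMulVec v v) *
        (t • (vecMulVec v a + vecMulVec a v) + (1 - t) • (vecMulVec v b - vecMulVec b v) + X)
      + (t • (vecMulVec v a + vecMulVec a v) + (1 - t) • (vecMulVec v b - vecMulVec b v) + X)ᵀ
        * (1 - (2 * t) • vecMulVec v v)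
      = (2 * t * (1 - t)) • (vecMulVec v (a - b) + vecMulVec (a - b) v) := by
  have hXv' : v ᵥ* X = 0 := by rw [← mulVec_transpose, hX, neg_mulVec, hXv, neg_zero]
  have ha' : v ⬝ᵥ a = 0 := by rw [dotProduct_comm, ha]
  have hb' : v ⬝ᵥ b = 0 := by rw [dotProduct_comm, hb]
  simp only [transpose_add, transpose_sub, transpose_smul, transpose_vecMulVec, hX, sub_mul,
    mul_sub, add_mul, mul_add, smul_mul_assoc, mul_smul_comm, one_mul,
    mul_one, neg_mul, vecMulVec_mul, mul_vecMulVec, hXv, hXv']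
  ext i j
  simp [vecMulVec_apply, vecMulVec_mulVec, hv, ha, hb, ha', hb']
  ring

end helpers

/-- The key bilinear-form formula: with `P₀ = I − 2t𝐧𝐧ᵀ`, `P₁ = tE₂ + (1−t)E₃ + E₄` and
`B = B₁ + B₂ + B₃ + B₄` decomposed along `V₁,…,V₄`,
`T_f(P₀,P₁,B) : B` is given by the explicit expression of Lemma A.1. -/
theorem stmt8 (n : ℕ) (v : Fin n → ℝ) (hv : (∑ i, v i ^ 2) = 1) (t : ℝ)
    (E2 E3 E4 B1 B2 B3 B4 : Matrix (Fin n) (Fin n) ℝ)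
    (hE2 : ∃ l : Fin n → ℝ, l ⬝ᵥ v = 0 ∧ E2 = vecMulVec v l + vecMulVec l v)
    (hE3 : ∃ l : Fin n → ℝ, l ⬝ᵥ v = 0 ∧ E3 = vecMulVec v l - vecMulVec l v)
    (hE4 : E4ᵀ = -E4 ∧ E4.mulVec v = 0)
    (hB1 : ∃ lam : ℝ, B1 = lam • vecMulVec v v)
    (hB2 : ∃ l : Fin n → ℝ, l ⬝ᵥ v = 0 ∧ B2 = vecMulVec v l + vecMulVec l v)
    (hB3 : ∃ l : Fin n → ℝ, l ⬝ᵥ v = 0 ∧ B3 = vecMulVec v l - vecMulVec l v)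
    (hB4 : B4ᵀ = -B4 ∧ B4.mulVec v = 0)
    (P₀ P₁ B : Matrix (Fin n) (Fin n) ℝ)
    (hP₀ : P₀ = 1 - (2 * t) • vecMulVec v v)
    (hP₁ : P₁ = t • E2 + (1 - t) • E3 + E4)
    (hB : B = B1 + B2 + B3 + B4) :
    finner (Tf P₀ P₁ B) B =
      2 * t * ((2 * t - 1) * finner E2 (B3 * B4 + B4 * B3)
          + (3 - 4 * t) * finner E2 (B1 * B2 + B2 * B1))
        + 2 * (1 - t) * ((1 - 4 * t) * finner E3 (B1 * B3 + B3 * B1)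
          + (1 - 2 * t) * finner E3 (B2 * B4 + B4 * B2))
        + 2 * (1 - 2 * t) * finner E4 (B2 * B3 + B3 * B2) := by
  obtain ⟨a, ha, rfl⟩ := hE2
  obtain ⟨b, hb, rfl⟩ := hE3
  obtain ⟨hX, hXv⟩ := hE4
  obtain ⟨s, rfl⟩ := hB1
  obtain ⟨c, hc, rfl⟩ := hB2
  obtain ⟨d, hd, rfl⟩ := hB3
  obtain ⟨hW, hWv⟩ := hB4
  have hvv : v ⬝ᵥ v = 1 := by rw [← hv]; simp [dotProduct, sq]
  have hPs : P₀ᵀ = P₀ := by simp [hP₀, transpose_vecMulVec]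
  have ha' : v ⬝ᵥ a = 0 := by rw [dotProduct_comm, ha]
  have hb' : v ⬝ᵥ b = 0 := by rw [dotProduct_comm, hb]
  have hc' : v ⬝ᵥ c = 0 := by rw [dotProduct_comm, hc]
  have hd' : v ⬝ᵥ d = 0 := by rw [dotProduct_comm, hd]
  have hvX : v ᵥ* E4 = 0 := by rw [← mulVec_transpose, hX, neg_mulVec, hXv, neg_zero]
  have hvW : v ᵥ* B4 = 0 := by rw [← mulVec_transpose, hW, neg_mulVec, hWv, neg_zero]
  have hvX' : ∀ x, v ⬝ᵥ E4 *ᵥ x = 0 := fun x => by simp [dotProduct_mulVec, hvX]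
  have hvW' : ∀ x, v ⬝ᵥ B4 *ᵥ x = 0 := fun x => by simp [dotProduct_mulVec, hvW]
  have skX : ∀ x y, x ⬝ᵥ E4 *ᵥ y = -(y ⬝ᵥ E4 *ᵥ x) := fun x y => by
    rw [dotProduct_mulVec, ← mulVec_transpose, hX, neg_mulVec, neg_dotProduct, dotProduct_comm]
  have vmW : ∀ x, x ᵥ* B4 = -(B4 *ᵥ x) := fun x => by rw [← mulVec_transpose, hW, neg_mulVec]
  have cmW : ∀ x y, (B4 *ᵥ x) ⬝ᵥ y = y ⬝ᵥ B4 *ᵥ x := fun x y => dotProduct_comm _ _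
  have hXWW : finner E4 (B4 * B4) = 0 := finner_skew_mul_self hX hW
  have eB : B = vecMulVec v (s • v + c + d) + vecMulVec (c - d) v + B4 := by
    rw [hB]; ext i j; simp [vecMulVec_apply]; ring
  have eBt : Bᵀ = vecMulVec (s • v + c + d) v + vecMulVec v (c - d) - B4 := by
    rw [eB]; simp [transpose_vecMulVec, hW, sub_eq_add_neg]
  -- Cyclicity of the trace, then the rank-two form of the coefficients of `B Bᵀ` and `Bᵀ B`.
  rw [finner_Tf_eq hPs, hP₁, hP₀, Q_eq t hvv ha hb hX hXv, R_eq t hvv ha hb hX hXv]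
  have hBPB : B * (1 - (2 * t) • vecMulVec v v) * B
      = B * B - (2 * t) • vecMulVec (s • v + c - d) (s • v + c + d) := by
    have e1 : B *ᵥ v = s • v + c - d := by
      rw [eB]
      simp [add_mulVec, vecMulVec_mulVec, add_dotProduct, hvv, hc, hd, hWv]
      abel
    have e2 : v ᵥ* B = s • v + c + d := by
      rw [eB]
      simp [vecMul_add, vecMul_vecMulVec, dotProduct_sub, hvv, hc', hd', hvW]
    simp only [mul_sub, sub_mul, mul_one, mul_smul_comm, smul_mul_assoc, mul_vecMulVec,
      vecMulVec_mul, e1, e2]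
  rw [hBPB, eBt, eB]
  -- Both sides become polynomials in `s`, `t` and the numbers `x ⬝ᵥ y`, `x ⬝ᵥ M *ᵥ y`.
  simp only [finner_add_left, finner_sub_left, finner_smul_left, finner_vec_left,
    finner_add_right, finner_sub_right, finner_smul_right, finner_vec_right, hXWW,
    add_mul, mul_add, sub_mul, mul_sub, smul_mul_assoc, mul_smul_comm,
    add_mulVec, sub_mulVec, mulVec_add, mulVec_sub, smul_mulVec, mulVec_smul, ← mulVec_mulVec,
    vecMulVec_mulVec, vecMulVec_mul, mul_vecMulVec, hvW, hXv, hWv,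
    dotProduct_add, add_dotProduct, dotProduct_sub, sub_dotProduct, dotProduct_smul,
    smul_dotProduct, op_smul_eq_smul, smul_eq_mul, hvX', hvW', hvv, ha, hb, hc, hd,
    ha', hb', hc', hd', mulVec_zero, dotProduct_zero, smul_zero,
    vecMulVec_zero, zero_vecMulVec, vmW, cmW,
    vecMulVec_neg, finner_neg_right, mul_zero, zero_mul, mul_one, one_mul, add_zero, zero_add,
    sub_zero, zero_sub]
  have hcc : c ⬝ᵥ E4 *ᵥ c = 0 := by linarith [skX c c]
  have hdd : d ⬝ᵥ E4 *ᵥ d = 0 := by linarith [skX d d]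
  rw [hcc, hdd, skX d c, dotProduct_comm c a, dotProduct_comm c b, dotProduct_comm d a,
    dotProduct_comm d b]
  ring
end
end

section
/- For every ν₀ > 0 there exist constants C₀(ν₀) > 0, C₁ > 0 and ε₀ > 0 such that for all 0 < ε ≤ ε₀ and every continuously differentiable q̄₁ on [−1,1], setting q₁ = θ_ε q̄₁, one has ∫_{−1}^{1} ((q₁′)² + ε⁻²κ₁(s_ε)q₁²) dr ≥ (1/2 − C₁ε⁻¹e^{−√2/ε} − ν₀) ∫_{−1}^{1} θ_ε² (q̄₁′)² dr − C₀(ν₀) ε⁻² e^{−2√2/ε} ∫_{−1}^{1} θ_ε² q̄₁² dr. -/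
/-- The rescaled profile `s_ε(r) = s(r/ε)`. -/
noncomputable def sE (ε r : ℝ) : ℝ := sAC (r / ε)

/-- The approximate kernel `θ_ε(r) = √2 s_ε(r)(1 − s_ε(r)) = ε s_ε′(r)` of `ℒ₁`. -/
noncomputable def thetaE (ε r : ℝ) : ℝ := Real.sqrt 2 * sE ε r * (1 - sE ε r)

/-! ### The profile and its derivatives -/

lemma thetaE_eq (ε r : ℝ) :
    thetaE ε r = √2 / (Real.exp (√2 / ε * r) + 2 + Real.exp (-(√2 / ε * r))) := by
  have h : √2 * (r / ε) = √2 / ε * r := by ring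
  have hp := Real.exp_pos (√2 / ε * r)
  unfold thetaE sE sAC
  rw [h, Real.exp_neg]
  field_simp
  ring

lemma thetaE_neg (ε r : ℝ) : thetaE ε (-r) = thetaE ε r := by
  simp only [thetaE_eq, mul_neg, neg_neg]
  congr 1
  ring

lemma sE_mem (ε r : ℝ) : 0 ≤ sE ε r ∧ sE ε r ≤ 1 := by
  have hp := Real.exp_pos (√2 * (r / ε))
  unfold sE sAC
  have h1 : (1 + Real.exp (√2 * (r / ε)))⁻¹ ≤ 1 := inv_le_one_of_one_le₀ (by linarith)
  have h2 : 0 ≤ (1 + Real.exp (√2 * (r / ε)))⁻¹ := by positivity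
  constructor <;> linarith

lemma hasDerivAt_sE (ε r : ℝ) : HasDerivAt (sE ε) (thetaE ε r / ε) r := by
  have hp := Real.exp_pos (√2 * (r / ε))
  have h1 : HasDerivAt (fun x : ℝ => √2 * (x / ε)) (√2 * (1 / ε)) r :=
    ((hasDerivAt_id r).div_const ε).const_mul _
  have h2 := ((h1.exp.const_add 1).inv (by positivity)).const_sub 1
  refine h2.congr_deriv ?_
  simp only [thetaE, sE, sAC]
  by_cases hε : ε = 0
  · simp [hε]
  field_simp
  ring

lemma hasDerivAt_thetaE (ε r : ℝ) :
    HasDerivAt (thetaE ε) (√2 / ε * (1 - 2 * sE ε r) * thetaE ε r) r := by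
  have hs := hasDerivAt_sE ε r
  have h := (hs.const_mul √2).mul (hs.const_sub 1)
  refine h.congr_deriv ?_
  ring

lemma continuous_sE (ε : ℝ) : Continuous (sE ε) :=
  continuous_iff_continuousAt.2 fun r => (hasDerivAt_sE ε r).continuousAt

lemma continuous_thetaE (ε : ℝ) : Continuous (thetaE ε) :=
  continuous_iff_continuousAt.2 fun r => (hasDerivAt_thetaE ε r).continuousAt

/-! ### Integration by parts -/

/-- The energy in terms of `q̄`: the cross term and the potential combine into the exact derivative
of `θ_ε θ_ε' q̄²`. -/
lemma energy_identity (ε : ℝ) (q : ℝ → ℝ) (hq : ContDiff ℝ 1 q) :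
    (∫ r in (-1 : ℝ)..1, ((deriv (fun x => thetaE ε x * q x) r) ^ 2
        + (ε ^ 2)⁻¹ * (2 * (1 - 6 * sE ε r + 6 * (sE ε r) ^ 2)) * (thetaE ε r * q r) ^ 2))
      = (∫ r in (-1 : ℝ)..1, (thetaE ε r) ^ 2 * (deriv q r) ^ 2)
        + (√2 / ε * (1 - 2 * sE ε 1) * (thetaE ε 1) ^ 2 * (q 1) ^ 2
          - √2 / ε * (1 - 2 * sE ε (-1)) * (thetaE ε (-1)) ^ 2 * (q (-1)) ^ 2) := by
  have hs := continuous_sE ε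
  have ht := continuous_thetaE ε
  have hqc := hq.continuous
  have hdc : Continuous (deriv q) := hq.continuous_deriv le_rfl
  have hqd : ∀ r, HasDerivAt q (deriv q r) r := fun r =>
    (hq.differentiable one_ne_zero r).hasDerivAt
  have hprod : ∀ r, deriv (fun x => thetaE ε x * q x) r
      = √2 / ε * (1 - 2 * sE ε r) * thetaE ε r * q r + thetaE ε r * deriv q r := fun r =>
    ((hasDerivAt_thetaE ε r).mul (hqd r)).deriv
  have hF : ∀ r, HasDerivAt
      (fun r => √2 / ε * (1 - 2 * sE ε r) * (thetaE ε r) ^ 2 * (q r) ^ 2)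
      (((deriv (fun x => thetaE ε x * q x) r) ^ 2
        + (ε ^ 2)⁻¹ * (2 * (1 - 6 * sE ε r + 6 * (sE ε r) ^ 2)) * (thetaE ε r * q r) ^ 2)
        - (thetaE ε r) ^ 2 * (deriv q r) ^ 2) r := by
    intro r
    have h := (((((hasDerivAt_sE ε r).const_mul 2).const_sub 1).const_mul (√2 / ε)).mul
      ((hasDerivAt_thetaE ε r).pow 2)).mul ((hqd r).pow 2)
    refine h.congr_deriv ?_
    -- a polynomial identity in `s`, `q`, `q'` and `ε⁻¹`, modulo `√2 ^ 2 = 2`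
    rw [hprod]
    have h2 : √2 ^ 2 = 2 := Real.sq_sqrt (by norm_num)
    simp only [Pi.mul_apply, Pi.pow_apply]
    generalize deriv q r = p
    generalize q r = u
    have hth : thetaE ε r = √2 * sE ε r * (1 - sE ε r) := rfl
    generalize sE ε r = s at *
    rw [hth]
    generalize √2 = w at *
    have h4 : w ^ 4 = 4 := by rw [show w ^ 4 = (w ^ 2) ^ 2 by ring, h2]; norm_num
    simp only [div_eq_mul_inv, ← inv_pow]
    generalize ε⁻¹ = e
    push_cast
    ring_nf
    simp only [h2, h4]
    ring
  have hc1 : Continuous fun r => (deriv (fun x => thetaE ε x * q x) r) ^ 2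
        + (ε ^ 2)⁻¹ * (2 * (1 - 6 * sE ε r + 6 * (sE ε r) ^ 2)) * (thetaE ε r * q r) ^ 2 := by
    simp only [hprod]
    fun_prop
  have hc2 : Continuous fun r => (thetaE ε r) ^ 2 * (deriv q r) ^ 2 := by fun_prop
  have h := intervalIntegral.integral_eq_sub_of_hasDerivAt (a := -1) (b := 1)
    (fun r _ => hF r) ((hc1.sub hc2).intervalIntegrable _ _)
  rw [intervalIntegral.integral_sub (hc1.intervalIntegrable _ _)
    (hc2.intervalIntegrable _ _)] at h
  linarith

/-! ### Weighted trace inequality -/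

/-- An elementary majorant of `θ_ε⁻²` on `r ≥ 0`, where the decaying exponentials in `θ_ε⁻²` are
replaced by `1`. -/
lemma one_le_thetaE_sq_mul {ε r : ℝ} (hε : 0 < ε) (hr : 0 ≤ r) :
    1 ≤ (thetaE ε r) ^ 2 *
      ((Real.exp (2 * (√2 / ε * r)) + 4 * Real.exp (√2 / ε * r) + 11) / 2) := by
  have h2 : √2 ^ 2 = 2 := Real.sq_sqrt (by norm_num)
  have hx : 0 ≤ √2 / ε * r := by positivity
  rw [thetaE_eq, two_mul (√2 / ε * r), Real.exp_add, Real.exp_neg]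
  have hy := Real.one_le_exp hx
  generalize Real.exp (√2 / ε * r) = y at *
  have hi : y⁻¹ ≤ 1 := inv_le_one_of_one_le₀ hy
  have hi0 : 0 < y⁻¹ := by positivity
  have hm : y * y⁻¹ = 1 := by field_simp
  rw [div_pow, h2, div_mul_eq_mul_div, one_le_div (by positivity)]
  nlinarith

lemma thetaE_sq_le (ε r : ℝ) : (thetaE ε r) ^ 2 ≤ 2 * Real.exp (-(2 * (√2 / ε * r))) := by
  have h2 : √2 ^ 2 = 2 := Real.sq_sqrt (by norm_num)
  rw [thetaE_eq, div_pow, h2, Real.exp_neg (2 * (√2 / ε * r)), ← div_eq_mul_inv,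
    two_mul (√2 / ε * r), Real.exp_add]
  have hy := Real.exp_pos (√2 / ε * r)
  have hz := Real.exp_pos (-(√2 / ε * r))
  gcongr
  nlinarith

/-- On the scale `[0, ε]` the weight `θ_ε²` is bounded below by an absolute constant. -/
lemma thetaE_sq_ge {ε r : ℝ} (hε : 0 < ε) (hr : 0 ≤ r) (hr' : r ≤ ε) :
    1 ≤ 72 * (thetaE ε r) ^ 2 := by
  have h2 : √2 ^ 2 = 2 := Real.sq_sqrt (by norm_num)
  have hx : 0 ≤ √2 / ε * r := by positivity
  have hs2 : √2 ≤ 2 := by nlinarith [Real.sqrt_nonneg 2]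
  have hx2 : √2 / ε * r ≤ 2 := by
    rw [div_mul_eq_mul_div, div_le_iff₀ hε]
    nlinarith [Real.sqrt_nonneg 2]
  have hy1 : Real.exp (√2 / ε * r) ≤ 9 := by
    refine (Real.exp_le_exp.2 hx2).trans ?_
    rw [show (2 : ℝ) = 1 + 1 by norm_num, Real.exp_add]
    nlinarith [Real.exp_one_lt_d9, Real.exp_pos 1]
  have hz1 : Real.exp (-(√2 / ε * r)) ≤ 1 := Real.exp_le_one_iff.2 (by linarith)
  have hy := Real.exp_pos (√2 / ε * r)
  have hz := Real.exp_pos (-(√2 / ε * r))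
  rw [thetaE_eq, div_pow, h2, ← mul_div_assoc, one_le_div (by positivity)]
  nlinarith

/-- Cauchy–Schwarz on `[r₀, 1] ⊆ [0, 1]`; the factor in front of the integral bounds
`∫₀¹ θ_ε⁻²`. -/
lemma sq_sub_le {ε : ℝ} (hε : 0 < ε) (q : ℝ → ℝ) (hq : ContDiff ℝ 1 q)
    {r₀ : ℝ} (h0 : 0 ≤ r₀) (h1 : r₀ ≤ 1) :
    (q 1 - q r₀) ^ 2 ≤
      (Real.exp (2 * (√2 / ε)) / (4 * (√2 / ε)) + 2 * Real.exp (√2 / ε) / (√2 / ε) + 11 / 2) *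
        ∫ r in (0 : ℝ)..1, (thetaE ε r) ^ 2 * (deriv q r) ^ 2 := by
  have ht := continuous_thetaE ε
  have hdc : Continuous (deriv q) := hq.continuous_deriv le_rfl
  have hA : 0 < √2 / ε := by positivity
  have hθ : ∀ r, 0 ≤ r → 1 ≤ (thetaE ε r) ^ 2 *
      ((Real.exp (2 * (√2 / ε * r)) + 4 * Real.exp (√2 / ε * r) + 11) / 2) := fun r hr =>
    one_le_thetaE_sq_mul hε hr
  generalize √2 / ε = A at *
  set K := Real.exp (2 * A) / (4 * A) + 2 * Real.exp A / A + 11 / 2 with hK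
  have hKpos : 0 < K := by positivity
  set c := (q 1 - q r₀) / K with hc
  have hG : ∀ r, HasDerivAt
      (fun r => Real.exp (2 * (A * r)) / (4 * A) + 2 * Real.exp (A * r) / A + 11 / 2 * r)
      ((Real.exp (2 * (A * r)) + 4 * Real.exp (A * r) + 11) / 2) r := by
    intro r
    have hl : HasDerivAt (fun r : ℝ => A * r) (A * 1) r := (hasDerivAt_id r).const_mul A
    have h := (((hl.const_mul 2).exp.div_const (4 * A)).add
      ((hl.exp.const_mul 2).div_const A)).add ((hasDerivAt_id r).const_mul (11 / 2))
    refine h.congr_deriv ?_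
    field_simp
    ring
  have hgc : Continuous fun r =>
      (Real.exp (2 * (A * r)) + 4 * Real.exp (A * r) + 11) / 2 := by fun_prop
  have hwc : Continuous fun r => (thetaE ε r) ^ 2 * (deriv q r) ^ 2 := by fun_prop
  have hpt : ∀ r ∈ Set.Icc r₀ 1, 2 * c * deriv q r ≤ (thetaE ε r) ^ 2 * (deriv q r) ^ 2
      + c ^ 2 * ((Real.exp (2 * (A * r)) + 4 * Real.exp (A * r) + 11) / 2) := by
    intro r hr
    have h := hθ r (h0.trans hr.1)
    have hg0 : 0 ≤ (Real.exp (2 * (A * r)) + 4 * Real.exp (A * r) + 11) / 2 := by positivity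
    generalize (Real.exp (2 * (A * r)) + 4 * Real.exp (A * r) + 11) / 2 = g at *
    have ht2 : 0 < (thetaE ε r) ^ 2 := by
      by_contra hneg
      nlinarith
    generalize (thetaE ε r) ^ 2 = t at *
    -- multiply by `t` and complete the square: `(t q' - c)² ≥ 0`
    refine le_of_mul_le_mul_left ?_ ht2
    nlinarith [sq_nonneg (t * deriv q r - c), mul_nonneg (sq_nonneg c) (sub_nonneg.2 h)]
  have hkc : Continuous fun r => 2 * c * deriv q r := by fun_prop
  have hcgc : Continuous fun r =>
      c ^ 2 * ((Real.exp (2 * (A * r)) + 4 * Real.exp (A * r) + 11) / 2) := by fun_prop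
  have hsum : Continuous fun r => (thetaE ε r) ^ 2 * (deriv q r) ^ 2
      + c ^ 2 * ((Real.exp (2 * (A * r)) + 4 * Real.exp (A * r) + 11) / 2) := by fun_prop
  have hint := intervalIntegral.integral_mono_on (μ := MeasureTheory.volume) h1
    (hkc.intervalIntegrable _ _) (hsum.intervalIntegrable _ _) hpt
  rw [intervalIntegral.integral_const_mul, intervalIntegral.integral_add
    (hwc.intervalIntegrable _ _) (hcgc.intervalIntegrable _ _),
    intervalIntegral.integral_const_mul,
    intervalIntegral.integral_eq_sub_of_hasDerivAt (fun r _ => hG r)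
      (hgc.intervalIntegrable _ _),
    intervalIntegral.integral_eq_sub_of_hasDerivAt
      (fun r _ => (hq.differentiable one_ne_zero r).hasDerivAt)
      (hdc.intervalIntegrable _ _)] at hint
  have hsplit := intervalIntegral.integral_add_adjacent_intervals
    (hwc.intervalIntegrable (μ := MeasureTheory.volume) 0 r₀)
    (hwc.intervalIntegrable (μ := MeasureTheory.volume) r₀ 1)
  have hpos : 0 ≤ ∫ r in (0 : ℝ)..r₀, (thetaE ε r) ^ 2 * (deriv q r) ^ 2 :=
    intervalIntegral.integral_nonneg h0 fun r _ => by positivity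
  have hG0 : 0 ≤ Real.exp (2 * (A * r₀)) / (4 * A) + 2 * Real.exp (A * r₀) / A + 11 / 2 * r₀ := by
    positivity
  simp only [mul_one] at hint
  rw [← hK] at hint
  have hD : q 1 - q r₀ = c * K := by rw [hc]; field_simp
  rw [hD] at hint ⊢
  have hm := mul_nonneg (sq_nonneg c) hG0
  have hfin : c ^ 2 * K ≤ ∫ r in (0 : ℝ)..1, (thetaE ε r) ^ 2 * (deriv q r) ^ 2 := by
    nlinarith
  nlinarith [mul_le_mul_of_nonneg_left hfin hKpos.le]

/-- Control of one boundary term, with Young parameter `δ`. -/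
lemma trace_bound {ε δ : ℝ} (hε : 0 < ε) (hε1 : ε ≤ 1) (hδ : 0 < δ) (hδ1 : δ ≤ 1)
    (q : ℝ → ℝ) (hq : ContDiff ℝ 1 q) :
    √2 / ε * (2 * Real.exp (-(2 * (√2 / ε)))) * (q 1) ^ 2 ≤
      (1 / 2 + 41 * ε⁻¹ * Real.exp (-(√2 / ε)) + δ) *
          (∫ r in (0 : ℝ)..1, (thetaE ε r) ^ 2 * (deriv q r) ^ 2)
        + 216 * (1 + δ⁻¹) * (ε ^ 2)⁻¹ * Real.exp (-(2 * (√2 / ε))) *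
          (∫ r in (0 : ℝ)..1, (thetaE ε r) ^ 2 * (q r) ^ 2) := by
  have ht := continuous_thetaE ε
  have hqc := hq.continuous
  have h2 : √2 ^ 2 = 2 := Real.sq_sqrt (by norm_num)
  have hs0 : 0 < √2 := by positivity
  have hs2 : √2 ≤ 3 / 2 := by nlinarith
  have hCS := fun r₀ (h0 : 0 ≤ r₀) (h1 : r₀ ≤ 1) => sq_sub_le hε q hq h0 h1
  set I := ∫ r in (0 : ℝ)..1, (thetaE ε r) ^ 2 * (deriv q r) ^ 2 with hI
  set J := ∫ r in (0 : ℝ)..1, (thetaE ε r) ^ 2 * (q r) ^ 2 with hJ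
  have hI0 : 0 ≤ I := intervalIntegral.integral_nonneg zero_le_one fun r _ => by positivity
  set K := Real.exp (2 * (√2 / ε)) / (4 * (√2 / ε)) + 2 * Real.exp (√2 / ε) / (√2 / ε) + 11 / 2
    with hK
  have hK0 : 0 ≤ K := by positivity
  have hwc : Continuous fun r => (thetaE ε r) ^ 2 * (q r) ^ 2 := by fun_prop
  have hpt : ∀ r ∈ Set.Icc 0 ε, (q 1) ^ 2 ≤
      (1 + δ) * (K * I) + (1 + δ⁻¹) * 72 * ((thetaE ε r) ^ 2 * (q r) ^ 2) := by
    intro r hr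
    have h := hCS r hr.1 (hr.2.trans hε1)
    have hθ := mul_le_mul_of_nonneg_right (thetaE_sq_ge hε hr.1 hr.2) (sq_nonneg (q r))
    have hy : (q 1) ^ 2 ≤ (1 + δ) * (q 1 - q r) ^ 2 + (1 + δ⁻¹) * (q r) ^ 2 := by
      have : (1 + δ) * (q 1 - q r) ^ 2 + (1 + δ⁻¹) * (q r) ^ 2 - (q 1) ^ 2
          = δ⁻¹ * (δ * (q 1 - q r) - q r) ^ 2 := by
        field_simp
        ring
      have : 0 ≤ δ⁻¹ * (δ * (q 1 - q r) - q r) ^ 2 := by positivity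
      linarith
    have e1 := mul_le_mul_of_nonneg_left h (by positivity : 0 ≤ 1 + δ)
    have e2 := mul_le_mul_of_nonneg_left hθ (by positivity : 0 ≤ 1 + δ⁻¹)
    linarith
  have hcwc : Continuous fun r => (1 + δ⁻¹) * 72 * ((thetaE ε r) ^ 2 * (q r) ^ 2) := by fun_prop
  have hsum : Continuous fun r =>
      (1 + δ) * (K * I) + (1 + δ⁻¹) * 72 * ((thetaE ε r) ^ 2 * (q r) ^ 2) := by fun_prop
  have hint := intervalIntegral.integral_mono_on (μ := MeasureTheory.volume) hε.le
    (continuous_const.intervalIntegrable _ _) (hsum.intervalIntegrable _ _) hpt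
  rw [intervalIntegral.integral_add (continuous_const.intervalIntegrable _ _)
    (hcwc.intervalIntegrable _ _), intervalIntegral.integral_const,
    intervalIntegral.integral_const, intervalIntegral.integral_const_mul] at hint
  simp only [sub_zero, smul_eq_mul] at hint
  have hJε : (∫ r in (0 : ℝ)..ε, (thetaE ε r) ^ 2 * (q r) ^ 2) ≤ J := by
    have hsplit := intervalIntegral.integral_add_adjacent_intervals
      (hwc.intervalIntegrable (μ := MeasureTheory.volume) 0 ε)
      (hwc.intervalIntegrable (μ := MeasureTheory.volume) ε 1)
    have hpos : 0 ≤ ∫ r in ε..1, (thetaE ε r) ^ 2 * (q r) ^ 2 :=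
      intervalIntegral.integral_nonneg hε1 fun r _ => by positivity
    linarith
  have hJ0 : 0 ≤ J := intervalIntegral.integral_nonneg zero_le_one fun r _ => by positivity
  have hq1 : (q 1) ^ 2 ≤ (1 + δ) * (K * I) + (1 + δ⁻¹) * 72 * (ε⁻¹ * J) := by
    have e2 := mul_le_mul_of_nonneg_left hJε (by positivity : 0 ≤ (1 + δ⁻¹) * 72)
    refine le_of_mul_le_mul_left ?_ hε
    have : ε * ((1 + δ) * (K * I) + (1 + δ⁻¹) * 72 * (ε⁻¹ * J))
        = ε * ((1 + δ) * (K * I)) + (1 + δ⁻¹) * 72 * J := by field_simp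
    linarith
  have hexp2 : Real.exp (2 * (√2 / ε)) = (Real.exp (√2 / ε)) ^ 2 := by
    rw [two_mul, Real.exp_add, sq]
  have hey : Real.exp (-(√2 / ε)) * Real.exp (√2 / ε) = 1 := by
    rw [← Real.exp_add, neg_add_cancel, Real.exp_zero]
  have hexpn : Real.exp (-(2 * (√2 / ε))) = (Real.exp (-(√2 / ε))) ^ 2 := by
    rw [two_mul, neg_add, Real.exp_add, sq]
  have hy0 := Real.exp_pos (-(√2 / ε))
  have hy1 : Real.exp (-(√2 / ε)) ≤ 1 :=
    Real.exp_le_one_iff.2 (neg_nonpos.2 (by positivity))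
  rw [hexpn]
  rw [hexp2] at hK
  generalize Real.exp (-(√2 / ε)) = y at *
  generalize Real.exp (√2 / ε) = z at *
  -- the constant in front of the gradient term
  have hAK : √2 / ε * (2 * y ^ 2) * K = 1 / 2 + 4 * y + 11 * (√2 / ε) * y ^ 2 := by
    have hz : z = y⁻¹ := eq_inv_of_mul_eq_one_right hey
    rw [hK, hz]
    field_simp
    ring
  have hε' : 1 ≤ ε⁻¹ := (one_le_inv₀ hε).2 hε1
  have hcoef : (1 + δ) * (√2 / ε * (2 * y ^ 2) * K) ≤ 1 / 2 + 41 * ε⁻¹ * y + δ := by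
    rw [hAK, show √2 / ε = √2 * ε⁻¹ from div_eq_mul_inv _ _]
    have a1 : y ≤ ε⁻¹ * y := by nlinarith
    have a2 : √2 * ε⁻¹ * y ^ 2 ≤ 3 / 2 * (ε⁻¹ * y) := by
      have : √2 * ε⁻¹ * y ^ 2 = (√2 * y) * (ε⁻¹ * y) := by ring
      rw [this]
      have : √2 * y ≤ 3 / 2 := by nlinarith
      gcongr
    have a3 : 4 * y + 11 * (√2 * ε⁻¹) * y ^ 2 ≤ 41 / 2 * (ε⁻¹ * y) := by nlinarith
    have a4 : 0 ≤ 4 * y + 11 * (√2 * ε⁻¹) * y ^ 2 := by positivity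
    have a5 := mul_le_mul_of_nonneg_right hδ1 a4
    linarith
  have hcoef2 : √2 / ε * (2 * y ^ 2) * ((1 + δ⁻¹) * 72 * ε⁻¹)
      ≤ 216 * (1 + δ⁻¹) * (ε ^ 2)⁻¹ * y ^ 2 := by
    have : √2 / ε * (2 * y ^ 2) * ((1 + δ⁻¹) * 72 * ε⁻¹)
        = √2 * (144 * ((1 + δ⁻¹) * (ε ^ 2)⁻¹ * y ^ 2)) := by
      field_simp
      ring
    rw [this]
    have a1 : 0 ≤ (1 + δ⁻¹) * (ε ^ 2)⁻¹ * y ^ 2 := by positivity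
    have a2 := mul_le_mul_of_nonneg_right hs2 (mul_nonneg (by norm_num : (0 : ℝ) ≤ 144) a1)
    linarith
  have b1 := mul_le_mul_of_nonneg_left hq1 (by positivity : 0 ≤ √2 / ε * (2 * y ^ 2))
  have b2 := mul_le_mul_of_nonneg_right hcoef hI0
  have b3 := mul_le_mul_of_nonneg_right hcoef2 hJ0
  linarith

/-! ### Coercivity -/

/-- Coercive lower bound for the operator `ℒ₁` after factoring out the approximate
kernel `θ_ε` (Lemma 7.3). -/
theorem stmt10 (ν₀ : ℝ) (hν₀ : 0 < ν₀) :
    ∃ C₀ > (0 : ℝ), ∃ C₁ > (0 : ℝ), ∃ ε₀ > (0 : ℝ), ∀ ε : ℝ, 0 < ε → ε ≤ ε₀ →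
      ∀ qb : ℝ → ℝ, ContDiff ℝ 1 qb →
        (1 / 2 - C₁ * ε⁻¹ * Real.exp (-(Real.sqrt 2) / ε) - ν₀) *
            (∫ r in (-1 : ℝ)..1, (thetaE ε r) ^ 2 * (deriv qb r) ^ 2)
          - C₀ * (ε ^ 2)⁻¹ * Real.exp (-(2 * Real.sqrt 2) / ε) *
            (∫ r in (-1 : ℝ)..1, (thetaE ε r) ^ 2 * (qb r) ^ 2)
        ≤ ∫ r in (-1 : ℝ)..1,
            ((deriv (fun x => thetaE ε x * qb x) r) ^ 2
              + (ε ^ 2)⁻¹ * (2 * (1 - 6 * sE ε r + 6 * (sE ε r) ^ 2))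
                * (thetaE ε r * qb r) ^ 2) := by
  set δ := min ν₀ 1 with hδd
  have hδ : 0 < δ := lt_min hν₀ one_pos
  refine ⟨216 * (1 + δ⁻¹), by positivity, 41, by norm_num, 1, one_pos, ?_⟩
  intro ε hε hε1 q hq
  rw [energy_identity ε q hq, neg_div, neg_div, mul_div_assoc]
  have ht := continuous_thetaE ε
  have hqc := hq.continuous
  have hdc : Continuous (deriv q) := hq.continuous_deriv le_rfl
  have hqn : ContDiff ℝ 1 fun x => q (-x) := hq.comp contDiff_neg
  have hR := trace_bound hε hε1 hδ (min_le_right _ _) q hq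
  have hL := trace_bound hε hε1 hδ (min_le_right _ _) _ hqn
  have hL1 : (∫ r in (0 : ℝ)..1, (thetaE ε r) ^ 2 * (deriv (fun x => q (-x)) r) ^ 2)
      = ∫ r in (-1 : ℝ)..0, (thetaE ε r) ^ 2 * (deriv q r) ^ 2 := by
    have h := intervalIntegral.integral_comp_neg (a := 0) (b := 1)
      fun r => (thetaE ε r) ^ 2 * (deriv q r) ^ 2
    simpa only [deriv_comp_neg, neg_sq, thetaE_neg, neg_zero] using h
  have hL2 : (∫ r in (0 : ℝ)..1, (thetaE ε r) ^ 2 * (q (-r)) ^ 2)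
      = ∫ r in (-1 : ℝ)..0, (thetaE ε r) ^ 2 * (q r) ^ 2 := by
    have h := intervalIntegral.integral_comp_neg (a := 0) (b := 1)
      fun r => (thetaE ε r) ^ 2 * (q r) ^ 2
    simpa only [thetaE_neg, neg_zero] using h
  rw [hL1, hL2] at hL
  have hc1 : Continuous fun r => (thetaE ε r) ^ 2 * (deriv q r) ^ 2 := by fun_prop
  have hc2 : Continuous fun r => (thetaE ε r) ^ 2 * (q r) ^ 2 := by fun_prop
  have hs1 := intervalIntegral.integral_add_adjacent_intervals
    (hc1.intervalIntegrable (μ := MeasureTheory.volume) (-1) 0)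
    (hc1.intervalIntegrable (μ := MeasureTheory.volume) 0 1)
  have hs2 := intervalIntegral.integral_add_adjacent_intervals
    (hc2.intervalIntegrable (μ := MeasureTheory.volume) (-1) 0)
    (hc2.intervalIntegrable (μ := MeasureTheory.volume) 0 1)
  have hI0 : 0 ≤ ∫ r in (-1 : ℝ)..1, (thetaE ε r) ^ 2 * (deriv q r) ^ 2 :=
    intervalIntegral.integral_nonneg (by norm_num) fun r _ => by positivity
  have hA : 0 < √2 / ε := by positivity
  have hθ : (thetaE ε 1) ^ 2 ≤ 2 * Real.exp (-(2 * (√2 / ε))) := by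
    simpa using thetaE_sq_le ε 1
  have hB1 : -(√2 / ε * (2 * Real.exp (-(2 * (√2 / ε)))) * (q 1) ^ 2)
      ≤ √2 / ε * (1 - 2 * sE ε 1) * (thetaE ε 1) ^ 2 * (q 1) ^ 2 := by
    have e1 : √2 / ε * (thetaE ε 1) ^ 2 * (q 1) ^ 2
        ≤ √2 / ε * (2 * Real.exp (-(2 * (√2 / ε)))) * (q 1) ^ 2 := by gcongr
    have e2 : 0 ≤ √2 / ε * (thetaE ε 1) ^ 2 * (q 1) ^ 2 * (1 - sE ε 1) :=
      mul_nonneg (by positivity) (sub_nonneg.2 (sE_mem ε 1).2)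
    linarith
  have hB2 : √2 / ε * (1 - 2 * sE ε (-1)) * (thetaE ε (-1)) ^ 2 * (q (-1)) ^ 2
      ≤ √2 / ε * (2 * Real.exp (-(2 * (√2 / ε)))) * (q (-1)) ^ 2 := by
    rw [thetaE_neg]
    have e1 : √2 / ε * (thetaE ε 1) ^ 2 * (q (-1)) ^ 2
        ≤ √2 / ε * (2 * Real.exp (-(2 * (√2 / ε)))) * (q (-1)) ^ 2 := by gcongr
    have e2 : 0 ≤ √2 / ε * (thetaE ε 1) ^ 2 * (q (-1)) ^ 2 * sE ε (-1) :=
      mul_nonneg (by positivity) (sE_mem ε (-1)).1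
    linarith
  have hδν : δ * (∫ r in (-1 : ℝ)..1, (thetaE ε r) ^ 2 * (deriv q r) ^ 2)
      ≤ ν₀ * (∫ r in (-1 : ℝ)..1, (thetaE ε r) ^ 2 * (deriv q r) ^ 2) :=
    mul_le_mul_of_nonneg_right (min_le_left _ _) hI0
  rw [← hs1] at hδν ⊢
  rw [← hs2]
  linarith
end
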